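/- Suppose that ⟨v, e_c^(i)⟩_c = 0 for all i ∈ [n] and ⟨v, ẽ_c^(j)⟩_c = 0 for all j ∈ [n−1]. Then ⟨v, s⟩_c = 0 for every s ∈ S_c, the matrix e_{11} − v belongs to S_c (so e_{11} − v is the c-orthogonal projection of e_{11} onto S_c and v is the projection error), and the squared c-norm of the projection satisfies ⟨e_{11} − v, e_{11} − v⟩_c = z + x_1 + y_1. -/

import Mathlib

/-- The weighted inner product `⟨x,y⟩_c = Σ_{i,j} c_{ij} x_{ij} y_{ij}`. -/
def cinner {n : ℕ} (c x y : Fin n → Fin n → ℝ) : ℝ :=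
  ∑ i, ∑ j, c i j * x i j * y i j

/-- The subspace `S_c` of matrices of the form `x_{ij} = (w_i + w̃_j)/c_{ij}`. -/
def Sc (n : ℕ) (c : Fin n → Fin n → ℝ) : Set (Fin n → Fin n → ℝ) :=
  {x | ∃ w wt : Fin n → ℝ, ∀ i j, x i j = (w i + wt j) / c i j}

/-- `e_c^(i)`: the matrix whose `(i,j)` entry is `1/c_{ij}` for every `j`, `0` elsewhere. -/
noncomputable def ec {n : ℕ} (c : Fin n → Fin n → ℝ) (i : Fin n) : Fin n → Fin n → ℝ :=
  fun i' j => if i' = i then 1 / c i' j else 0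

/-- `ẽ_c^(j)`: the matrix whose `(i,j)` entry is `1/c_{ij}` for every `i`, `0` elsewhere. -/
noncomputable def ect {n : ℕ} (c : Fin n → Fin n → ℝ) (j : Fin n) : Fin n → Fin n → ℝ :=
  fun i j' => if j' = j then 1 / c i j' else 0

/-- The candidate projection-error matrix `v = (e_{11})_{⊥S_c}` built from the parameters
`x_1,…,x_{n−1}, y_1,…,y_{n−1}, z`. -/
noncomputable def Vmat (n : ℕ) (c : Fin n → Fin n → ℝ) (x y : Fin (n - 1) → ℝ) (z : ℝ) :
    Fin n → Fin n → ℝ :=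
  fun k l =>
    if hk : k.val < n - 1 then
      if hl : l.val < n - 1 then
        (if k.val = 0 ∧ l.val = 0 then 1 else 0) + (-z - x ⟨k.val, hk⟩ - y ⟨l.val, hl⟩) / c k l
      else -x ⟨k.val, hk⟩ / c k l
    else
      if hl : l.val < n - 1 then -y ⟨l.val, hl⟩ / c k l
      else z / c k l

/-!
Pairing `v` with the matrix `(w_i + w̃_j) / c_{ij}` weights the row sums of `v` by `w` and its
column sums by `w̃`, so `v ⊥ S_c` means that all row and column sums of `v` vanish. The hypotheses
say this for every row and for every column but the last, and the last column follows because both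
kinds of sums add up to the sum of all entries. Moreover `p = e₁₁ - v` has the form
`(w_i + w̃_j) / c_{ij}`, so `⟨p, p⟩_c = ⟨e₁₁, p⟩_c = c₁₁ p₁₁ = w₁ + w̃₁`.
-/

theorem sum_col_eq_zero_of_sum_row_eq_zero {ι κ M : Type*} [Fintype ι] [Fintype κ]
    [AddCommMonoid M] {v : ι → κ → M} {l : κ} (hrow : ∀ i, ∑ j, v i j = 0)
    (hcol : ∀ j ≠ l, ∑ i, v i j = 0) : ∑ i, v i l = 0 := by
  calc ∑ i, v i l = ∑ j, ∑ i, v i j := (Fintype.sum_eq_single l hcol).symm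
    _ = ∑ i, ∑ j, v i j := Finset.sum_comm
    _ = 0 := Fintype.sum_eq_zero _ hrow

section WeightedPairing

variable {n : ℕ} {c : Fin n → Fin n → ℝ}

theorem cinner_sub_left (c a b s : Fin n → Fin n → ℝ) :
    cinner c (a - b) s = cinner c a s - cinner c b s := by
  simp only [cinner, Pi.sub_apply, mul_sub, sub_mul, Finset.sum_sub_distrib]

theorem cinner_ite_left (c s : Fin n → Fin n → ℝ) (k l : Fin n) :
    cinner c (fun i j => if i.val = k.val ∧ j.val = l.val then 1 else 0) s = c k l * s k l := by
  simp [cinner, Fin.val_inj, ite_and]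

/-- The matrix `(w_i + w̃_j) / c_{ij}`, the general element of `S_c`. -/
noncomputable def scaledOuterSum (c : Fin n → Fin n → ℝ) (w wt : Fin n → ℝ) :
    Fin n → Fin n → ℝ :=
  fun i j => (w i + wt j) / c i j

theorem mem_Sc_iff {s : Fin n → Fin n → ℝ} :
    s ∈ Sc n c ↔ ∃ w wt, s = scaledOuterSum c w wt := by
  simp only [Sc, Set.mem_ofPred_eq, scaledOuterSum, funext_iff]

theorem ec_eq_scaledOuterSum (c : Fin n → Fin n → ℝ) (i : Fin n) :
    ec c i = scaledOuterSum c (Pi.single i 1) 0 := by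
  ext k l
  simp [ec, scaledOuterSum, Pi.single_apply, ite_div]

theorem ect_eq_scaledOuterSum (c : Fin n → Fin n → ℝ) (j : Fin n) :
    ect c j = scaledOuterSum c 0 (Pi.single j 1) := by
  ext k l
  simp [ect, scaledOuterSum, Pi.single_apply, ite_div]

theorem cinner_scaledOuterSum (hc : ∀ i j, c i j ≠ 0) (v : Fin n → Fin n → ℝ)
    (w wt : Fin n → ℝ) :
    cinner c v (scaledOuterSum c w wt) =
      ∑ i, w i * ∑ j, v i j + ∑ j, wt j * ∑ i, v i j := by
  have entry (i j) :
      c i j * v i j * scaledOuterSum c w wt i j = w i * v i j + wt j * v i j := by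
    have := hc i j
    simp only [scaledOuterSum]
    field_simp
  simp only [cinner, entry, Finset.sum_add_distrib, Finset.mul_sum]
  rw [Finset.sum_comm (f := fun i j => wt j * v i j)]

theorem cinner_ec (hc : ∀ i j, c i j ≠ 0) (v : Fin n → Fin n → ℝ) (i : Fin n) :
    cinner c v (ec c i) = ∑ j, v i j := by
  simp [ec_eq_scaledOuterSum, cinner_scaledOuterSum hc, Pi.single_apply]

theorem cinner_ect (hc : ∀ i j, c i j ≠ 0) (v : Fin n → Fin n → ℝ) (j : Fin n) :
    cinner c v (ect c j) = ∑ i, v i j := by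
  simp [ect_eq_scaledOuterSum, cinner_scaledOuterSum hc, Pi.single_apply]

theorem cinner_eq_zero_of_mem_Sc (hc : ∀ i j, c i j ≠ 0) {v s : Fin n → Fin n → ℝ}
    (hrow : ∀ i, cinner c v (ec c i) = 0) {l : Fin n}
    (hcol : ∀ j ≠ l, cinner c v (ect c j) = 0) (hs : s ∈ Sc n c) : cinner c v s = 0 := by
  simp only [cinner_ec hc] at hrow
  simp only [cinner_ect hc] at hcol
  have hcol_all (j) : ∑ i, v i j = 0 := by
    obtain rfl | hj := eq_or_ne j l
    · exact sum_col_eq_zero_of_sum_row_eq_zero hrow hcol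
    · exact hcol j hj
  obtain ⟨w, wt, rfl⟩ := mem_Sc_iff.mp hs
  simp [cinner_scaledOuterSum hc, hrow, hcol_all]

end WeightedPairing

theorem sub_Vmat_eq_scaledOuterSum {n : ℕ} (c : Fin n → Fin n → ℝ) (x y : Fin (n - 1) → ℝ)
    (z : ℝ) (hn : 2 ≤ n) :
    (fun i j : Fin n => if i.val = 0 ∧ j.val = 0 then (1 : ℝ) else 0) - Vmat n c x y z =
      scaledOuterSum c (fun k => if hk : k.val < n - 1 then x ⟨k, hk⟩ + z else 0)
        (fun l => if hl : l.val < n - 1 then y ⟨l, hl⟩ else -z) := by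
  ext k l
  simp only [Pi.sub_apply, Vmat, scaledOuterSum]
  split_ifs <;> first | omega | ring

theorem stmt9_general {n : ℕ} (hn : 2 ≤ n) (c : Fin n → Fin n → ℝ) (hc : ∀ i j, c i j ≠ 0)
    (x y : Fin (n - 1) → ℝ) (z : ℝ)
    (h1 : ∀ i : Fin n, cinner c (Vmat n c x y z) (ec c i) = 0)
    (h2 : ∀ j : Fin (n - 1),
      cinner c (Vmat n c x y z) (ect c (Fin.castLE (Nat.sub_le n 1) j)) = 0) :
    (∀ s ∈ Sc n c, cinner c (Vmat n c x y z) s = 0) ∧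
    ((fun i j : Fin n => if i.val = 0 ∧ j.val = 0 then (1 : ℝ) else 0) - Vmat n c x y z)
      ∈ Sc n c ∧
    cinner c
      ((fun i j : Fin n => if i.val = 0 ∧ j.val = 0 then (1 : ℝ) else 0) - Vmat n c x y z)
      ((fun i j : Fin n => if i.val = 0 ∧ j.val = 0 then (1 : ℝ) else 0) - Vmat n c x y z)
      = z + x ⟨0, Nat.sub_pos_of_lt hn⟩ + y ⟨0, Nat.sub_pos_of_lt hn⟩ := by
  set e₁₁ : Fin n → Fin n → ℝ := fun i j => if i.val = 0 ∧ j.val = 0 then 1 else 0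
  set v := Vmat n c x y z
  have hp := sub_Vmat_eq_scaledOuterSum c x y z hn
  have hcol (j : Fin n) (hj : j ≠ ⟨n - 1, by omega⟩) : cinner c v (ect c j) = 0 :=
    h2 ⟨j, by have := Fin.val_ne_of_ne hj; lia⟩
  have orthogonal (s) (hs : s ∈ Sc n c) : cinner c v s = 0 :=
    cinner_eq_zero_of_mem_Sc hc h1 hcol hs
  have mem : e₁₁ - v ∈ Sc n c := mem_Sc_iff.mpr ⟨_, _, hp⟩
  refine ⟨orthogonal, mem, ?_⟩
  have hn₀ : 0 < n := by omega
  have hn₁ : 0 < n - 1 := Nat.sub_pos_of_lt hn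
  calc cinner c (e₁₁ - v) (e₁₁ - v) = cinner c e₁₁ (e₁₁ - v) := by
        rw [cinner_sub_left, orthogonal _ mem, sub_zero]
    _ = c ⟨0, hn₀⟩ ⟨0, hn₀⟩ * (e₁₁ - v) ⟨0, hn₀⟩ ⟨0, hn₀⟩ :=
        cinner_ite_left c (e₁₁ - v) ⟨0, hn₀⟩ ⟨0, hn₀⟩
    _ = x ⟨0, hn₁⟩ + z + y ⟨0, hn₁⟩ := by
        rw [hp, scaledOuterSum, mul_div_cancel₀ _ (hc _ _), dif_pos hn₁, dif_pos hn₁]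
    _ = z + x ⟨0, hn₁⟩ + y ⟨0, hn₁⟩ := by ring

/-- if `v` is `c`-orthogonal to all `e_c^(i)`, `i ∈ [n]`, and all `ẽ_c^(j)`,
`j ∈ [n−1]`, then `v` is `c`-orthogonal to all of `S_c`, `e_{11} − v ∈ S_c` (so `e_{11} − v`
is the `c`-orthogonal projection of `e_{11}` onto `S_c` and `v` is the projection error), and
`⟨e_{11} − v, e_{11} − v⟩_c = z + x_1 + y_1`. -/
theorem stmt9 {n : ℕ} (hn : 2 ≤ n) (c : Fin n → Fin n → ℝ) (hc : ∀ i j, 0 < c i j)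
    (x y : Fin (n - 1) → ℝ) (z : ℝ)
    (h1 : ∀ i : Fin n, cinner c (Vmat n c x y z) (ec c i) = 0)
    (h2 : ∀ j : Fin (n - 1),
      cinner c (Vmat n c x y z) (ect c (Fin.castLE (Nat.sub_le n 1) j)) = 0) :
    (∀ s ∈ Sc n c, cinner c (Vmat n c x y z) s = 0) ∧
    ((fun i j : Fin n => if i.val = 0 ∧ j.val = 0 then (1 : ℝ) else 0) - Vmat n c x y z)
      ∈ Sc n c ∧
    cinner c
      ((fun i j : Fin n => if i.val = 0 ∧ j.val = 0 then (1 : ℝ) else 0) - Vmat n c x y z)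
      ((fun i j : Fin n => if i.val = 0 ∧ j.val = 0 then (1 : ℝ) else 0) - Vmat n c x y z)
      = z + x ⟨0, by omega⟩ + y ⟨0, by omega⟩ :=
  stmt9_general hn c (fun i j => (hc i j).ne') x y z h1 h2
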